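/- arXiv:1804.10118 — 3 statements merged into one kernel-verified Lean document; each statement's English description precedes it below -/
import Mathlib

section
/- Let (Ω, 𝒜, μ) be a probability space, m ⊆ 𝒜 a sub-σ-algebra, ε : Ω → ℝ a random variable with standard normal law N(0,1) independent of m, and T : Ω → ℝ an m-measurable random variable. Define G* := 1{T + ε ≥ 0}, and let G : Ω → ℝ take values in {0,1} almost surely with E[G | m ⊔ σ(ε)] = r0 + (1 − r0 − r1)·G* almost surely, where r0, r1 ≥ 0 and r0 + r1 < 1. Then E[G | m] = r0 + (1 − r0 − r1)·Φ(T) almost surely. -/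
open MeasureTheory ProbabilityTheory

/-- The standard normal density `φ(x) = (2π)^{−1/2}·exp(−x²/2)`. -/
noncomputable def stdNormalPdf (x : ℝ) : ℝ :=
  (Real.sqrt (2 * Real.pi))⁻¹ * Real.exp (-x ^ 2 / 2)

/-- The standard normal cdf `Φ(t) = ∫_{−∞}^t φ(x) dx`. -/
noncomputable def stdNormalCdf (t : ℝ) : ℝ := ∫ x in Set.Iic t, stdNormalPdf x

lemma gaussian_aux (t : ℝ) :
    ∫ y, (if 0 ≤ t + y then (1 : ℝ) else 0) ∂(gaussianReal 0 1) = stdNormalCdf t := by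
  have hneg : (gaussianReal 0 1).map (fun x : ℝ => -x) = gaussianReal 0 1 := by
    rw [gaussianReal_map_neg, neg_zero]
  have hf : (fun y : ℝ => if 0 ≤ t + y then (1 : ℝ) else 0) =
      (Set.Ici (-t)).indicator (fun _ => (1 : ℝ)) := by
    funext y
    by_cases h : 0 ≤ t + y
    · rw [if_pos h, Set.indicator_of_mem]
      simp only [Set.mem_Ici]; linarith
    · rw [if_neg h, Set.indicator_of_notMem]
      simp only [Set.mem_Ici]; intro h'; apply h; linarith
  have hpre : (fun x : ℝ => -x) ⁻¹' (Set.Ici (-t)) = Set.Iic t := by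
    ext x; simp
  rw [hf, integral_indicator_const _ measurableSet_Ici, smul_eq_mul, mul_one, Measure.real,
    ← hneg, Measure.map_apply (by fun_prop) measurableSet_Ici, hpre,
    gaussianReal_apply_eq_integral _ one_ne_zero, ENNReal.toReal_ofReal
      (integral_nonneg (fun x => gaussianPDFReal_nonneg _ _ _))]
  unfold stdNormalCdf
  congr 1
  funext x
  simp [gaussianPDFReal, stdNormalPdf]

lemma condExp_aux {Ω β : Type*} {mβ : MeasurableSpace β} {mΩ : MeasurableSpace Ω}
    (μ : Measure Ω) [IsProbabilityMeasure μ] (X : Ω → β) (hX : Measurable X)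
    (ε : Ω → ℝ) (hε : Measurable ε) (hlaw : μ.map ε = gaussianReal 0 1)
    (hInd : IndepFun X ε μ) (f : β × ℝ → ℝ) (hf : StronglyMeasurable f)
    (hfi : Integrable (fun a => f (X a, ε a)) μ) :
    μ[fun a => f (X a, ε a) | mβ.comap X] =ᵐ[μ]
      fun a => ∫ y, f (X a, y) ∂(gaussianReal 0 1) := by
  have h1 := condExp_prod_ae_eq_integral_condDistrib hX hε.aemeasurable hf hfi
  have h2 : condDistrib ε X μ =ᵐ[μ.map X] Kernel.const β (gaussianReal 0 1) := by
    refine condDistrib_ae_eq_of_measure_eq_compProd X hε.aemeasurable ?_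
    rw [Measure.compProd_const, ← hlaw]
    exact (indepFun_iff_map_prod_eq_prod_map_map hX.aemeasurable hε.aemeasurable).1 hInd
  have h3 := ae_of_ae_map hX.aemeasurable h2
  filter_upwards [h1, h3] with a ha hb
  rw [ha, hb, Kernel.const_apply]

/-- forward direction of Theorem 1: with `ε ~ N(0,1)` independent of
`m`, `T` `m`-measurable, `G* = 1{T + ε ≥ 0}`, and
`E[G | m ⊔ σ(ε)] = r0 + (1 − r0 − r1)·G*` a.s., one has
`E[G | m] = r0 + (1 − r0 − r1)·Φ(T)` a.s. -/
theorem condexp_misclassified_probit {Ω : Type*} (m : MeasurableSpace Ω)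
    {𝒜 : MeasurableSpace Ω} (hm : m ≤ 𝒜)
    (μ : Measure Ω) [IsProbabilityMeasure μ]
    (ε : Ω → ℝ) (hε : Measurable[𝒜] ε)
    (hlaw : μ.map ε = gaussianReal 0 1)
    (hInd : Indep (MeasurableSpace.comap ε inferInstance) m μ)
    (T : Ω → ℝ) (hT : Measurable[m] T)
    (r0 r1 : ℝ) (hr0 : 0 ≤ r0) (hr1 : 0 ≤ r1) (hrsum : r0 + r1 < 1)
    (G : Ω → ℝ) (hG01 : ∀ᵐ ω ∂μ, G ω = 0 ∨ G ω = 1)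
    (hG : μ[G | m ⊔ MeasurableSpace.comap ε inferInstance] =ᵐ[μ]
      fun ω => r0 + (1 - r0 - r1) * (if 0 ≤ T ω + ε ω then (1 : ℝ) else 0)) :
    μ[G | m] =ᵐ[μ] fun ω => r0 + (1 - r0 - r1) * stdNormalCdf (T ω) := by
  have hc : MeasurableSpace.comap ε inferInstance ≤ 𝒜 := hε.comap_le
  have h1 := condExp_condExp_of_le (f := G) (μ := μ)
    (le_sup_left : m ≤ m ⊔ MeasurableSpace.comap ε inferInstance) (sup_le hm hc)
  refine h1.symm.trans ((condExp_congr_ae hG).trans ?_)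
  let f : Ω × ℝ → ℝ := fun p => r0 + (1 - r0 - r1) * (if 0 ≤ T p.1 + p.2 then (1 : ℝ) else 0)
  have hfm : @Measurable (Ω × ℝ) ℝ (@Prod.instMeasurableSpace Ω ℝ m _) _ f := by
    have hT1 : @Measurable (Ω × ℝ) ℝ (@Prod.instMeasurableSpace Ω ℝ m _) _
        (fun p => T p.1 + p.2) :=
      (hT.comp (@measurable_fst Ω ℝ m _)).add (@measurable_snd Ω ℝ m _)
    exact measurable_const.add (measurable_const.mul
      (Measurable.ite (hT1 measurableSet_Ici) measurable_const measurable_const))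
  have hX : @Measurable Ω Ω 𝒜 m id := fun s hs => hm s hs
  have hInd' : @IndepFun Ω Ω ℝ 𝒜 m _ id ε μ := by
    have := hInd.symm
    refine (@IndepFun_iff_Indep Ω Ω ℝ 𝒜 m _ id ε μ).2 ?_
    rw [MeasurableSpace.comap_id]
    exact this
  have hmeas : Measurable[𝒜] (fun a => f (id a, ε a)) :=
    hfm.comp (hX.prodMk hε)
  have hfi : Integrable (fun a => f (id a, ε a)) μ := by
    refine Integrable.of_bound hmeas.aestronglyMeasurable (|r0| + |1 - r0 - r1|)
      (ae_of_all _ fun a => ?_)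
    simp only [f, Real.norm_eq_abs]
    refine (abs_add_le _ _).trans ?_
    refine add_le_add le_rfl ?_
    rw [abs_mul]
    split_ifs <;> simp
  have h2 := @condExp_aux Ω Ω m 𝒜 μ _ id hX ε hε hlaw hInd' f hfm.stronglyMeasurable hfi
  rw [MeasurableSpace.comap_id] at h2
  refine h2.trans (ae_of_all _ fun a => ?_)
  have hint : Integrable (fun y : ℝ => if 0 ≤ T a + y then (1 : ℝ) else 0)
      (gaussianReal 0 1) := by
    refine Integrable.of_bound (Measurable.aestronglyMeasurable ?_) 1
      (ae_of_all _ fun y => ?_)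
    · exact Measurable.ite (measurableSet_le measurable_const (by fun_prop))
        measurable_const measurable_const
    · split_ifs <;> simp
  simp only [f, id]
  rw [integral_add (integrable_const _) (hint.const_mul _), integral_const_mul, gaussian_aux]
  simp
end

section
/- Let d ≥ 1, let r0, r1 ≥ 0 with r0 + r1 < 1, and let b1 ∈ ℝ³, b2 ∈ ℝ^d. Let P be a Borel probability measure on {0,1} × ℝ^d × ℝ⁴ with coordinates (g, x, γ) such that, P-almost surely, E_P[g | (x, γ)] = r0 + (1 − r0 − r1)·Φ((c(r0,r1) + C(r0,r1)γ)·b1 + x·b2). Then there exist a probability space (Ω, 𝒜, μ) and random variables G : Ω → ℝ taking values in {0,1}, X : Ω → ℝ^d, Γ : Ω → ℝ⁴, Γ* : Ω → ℝ³, ε : Ω → ℝ such that: (i) the law of the triple (G, X, Γ) under μ equals P; (ii) ε has standard normal law N(0,1) and is independent of σ(X, Γ, Γ*); (iii) Γ* = c(r0,r1) + C(r0,r1)·Γ μ-almost surely; and (iv) setting G* := 1{Γ*·b1 + X·b2 + ε ≥ 0}, one has E[G | σ(X, Γ, Γ*, ε)] = r0 + (1 − r0 − r1)·G* μ-almost surely.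 -/
open MeasureTheory ProbabilityTheory Matrix

/-- The 4×4 matrix `D(r0,r1)` from Lemma 2 of the paper, with `s = 1 − r0 − r1`. -/
def Dmat (r0 r1 : ℝ) : Matrix (Fin 4) (Fin 4) ℝ :=
  !![1 - r0 - r1, 0, 0, 0;
     0, 1 - r0 - r1, 0, 0;
     0, 0, (1 - r0 - r1) ^ 2, r0 * (1 - r0 - r1);
     0, 0, 0, 1 - r0 - r1]

/-- The 3×4 selection matrix `S = [I₃ | 0]`. -/
def Smat : Matrix (Fin 3) (Fin 4) ℝ :=
  !![1, 0, 0, 0;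
     0, 1, 0, 0;
     0, 0, 1, 0]

/-- The vector `v(r0) = (r0, r0, r0², r0)`. -/
def vvec (r0 : ℝ) : Fin 4 → ℝ := ![r0, r0, r0 ^ 2, r0]

/-- The 3×4 matrix `C(r0,r1) = S · D(r0,r1)⁻¹`. -/
noncomputable def Cmat (r0 r1 : ℝ) : Matrix (Fin 3) (Fin 4) ℝ := Smat * (Dmat r0 r1)⁻¹

/-- The vector `c(r0,r1) = −C(r0,r1)·v(r0) ∈ ℝ³`. -/
noncomputable def cvec (r0 r1 : ℝ) : Fin 3 → ℝ := -(Cmat r0 r1).mulVec (vvec r0)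

theorem aux_law {E : Type*} [MeasurableSpace E] (P P' : Measure (ℝ × E))
    [IsProbabilityMeasure P] [IsProbabilityMeasure P']
    (h : ∀ᵐ p ∂P, p.1 = 0 ∨ p.1 = 1) (h' : ∀ᵐ p ∂P', p.1 = 0 ∨ p.1 = 1)
    (hm : P.map Prod.snd = P'.map Prod.snd)
    (hi : ∀ B : Set E, MeasurableSet B →
      ∫ p in Prod.snd ⁻¹' B, p.1 ∂P = ∫ p in Prod.snd ⁻¹' B, p.1 ∂P') : P = P' := by
  have key : ∀ (M : Measure (ℝ × E)) [IsProbabilityMeasure M],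
      (∀ᵐ p ∂M, p.1 = 0 ∨ p.1 = 1) → ∀ (A : Set ℝ) (B : Set E), MeasurableSet A →
      MeasurableSet B → M.real (A ×ˢ B) =
        A.indicator (fun _ => (1 : ℝ)) 1 * (∫ p in Prod.snd ⁻¹' B, p.1 ∂M) +
        A.indicator (fun _ => (1 : ℝ)) 0 *
          ((M.map Prod.snd).real B - ∫ p in Prod.snd ⁻¹' B, p.1 ∂M) := by
    intro M _ hR A B hA hB
    have hint : Integrable (fun p : ℝ × E => p.1) M := by
      refine Integrable.of_bound (C := 1) measurable_fst.aestronglyMeasurable ?_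
      filter_upwards [hR] with p hp
      rcases hp with hp | hp <;> simp [hp]
    have e1 : M.real (A ×ˢ B) = ∫ p in Prod.snd ⁻¹' B,
        (A.indicator (fun _ => (1 : ℝ)) 1 * p.1 +
          A.indicator (fun _ => (1 : ℝ)) 0 * (1 - p.1)) ∂M := by
      rw [← integral_indicator_one (hA.prod hB), ← integral_indicator (measurable_snd hB)]
      refine integral_congr_ae ?_
      filter_upwards [hR] with p hp
      obtain ⟨g, e⟩ := p
      simp only at hp
      by_cases he : e ∈ B <;> rcases hp with rfl | rfl <;> by_cases h0 : (0 : ℝ) ∈ A <;>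
        by_cases h1 : (1 : ℝ) ∈ A <;> simp [Set.indicator, he, h0, h1, Set.mem_prod]
    have hint' := hint.integrableOn (s := Prod.snd ⁻¹' B)
    have hint2 : IntegrableOn (fun p : ℝ × E => 1 - p.1) (Prod.snd ⁻¹' B) M :=
      (integrable_const (1 : ℝ)).sub hint'
    rw [e1, integral_add (hint'.const_mul _) (hint2.const_mul _),
      integral_const_mul, integral_const_mul, integral_sub (integrable_const _) hint',
      map_measureReal_apply measurable_snd hB]
    simp
  refine Measure.ext_prod (fun {A} {B} hA hB => ?_)
  have := key P h A B hA hB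
  rw [hm, hi B hB, ← key P' h' A B hA hB] at this
  exact (measureReal_eq_measureReal_iff).1 this

theorem aux_condExp {A B : Type*} [MeasurableSpace A] [MeasurableSpace B] (μ : Measure A)
    (ν : Measure B) [IsProbabilityMeasure μ] [IsProbabilityMeasure ν] (f : A × B → ℝ)
    (hf : Integrable f (μ.prod ν)) (g : A → ℝ) (hg : Measurable g)
    (hfg : ∀ a, ∫ b, f (a, b) ∂ν = g a) :
    (μ.prod ν)[f | MeasurableSpace.comap Prod.fst inferInstance] =ᵐ[μ.prod ν]
      fun ω => g ω.1 := by
  have hgi : Integrable g μ := by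
    have := hf.integral_prod_left
    simpa only [hfg] using this
  have hgi' : Integrable (fun ω : A × B => g ω.1) (μ.prod ν) := hgi.comp_fst ν
  symm
  refine ae_eq_condExp_of_forall_setIntegral_eq measurable_fst.comap_le hf
    (fun _ _ _ => hgi'.integrableOn) ?_ ?_
  · rintro _ ⟨s, hs, rfl⟩ -
    have : (Prod.fst ⁻¹' s : Set (A × B)) = s ×ˢ Set.univ := by ext; simp
    rw [this, setIntegral_prod _ hf.integrableOn, setIntegral_prod _ hgi'.integrableOn]
    simp [hfg]
  · exact (hg.comp (comap_measurable Prod.fst)).aestronglyMeasurable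

theorem aux_unif (t : ℝ) (h0 : 0 ≤ t) (h1 : t ≤ 1) :
    ∫ u, (if u ≤ t then (1 : ℝ) else 0) ∂(volume.restrict (Set.Icc (0 : ℝ) 1)) = t := by
  have : (fun u : ℝ => if u ≤ t then (1 : ℝ) else 0) = (Set.Iic t).indicator 1 := by
    ext u; simp [Set.indicator]
  rw [this, integral_indicator_one measurableSet_Iic, measureReal_restrict_apply measurableSet_Iic]
  have : Set.Iic t ∩ Set.Icc (0 : ℝ) 1 = Set.Icc 0 t := by
    ext u; simp; constructor
    · rintro ⟨a, b, c⟩; exact ⟨b, a⟩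
    · rintro ⟨a, b⟩; exact ⟨b, a, b.trans h1⟩
  rw [this]; simp [h0]

theorem aux_gauss (t : ℝ) :
    ∫ e, (if 0 ≤ t + e then (1 : ℝ) else 0) ∂(gaussianReal 0 1) = stdNormalCdf t := by
  have : (fun e : ℝ => if 0 ≤ t + e then (1 : ℝ) else 0)
      = fun e => (Set.Iic t).indicator (1 : ℝ → ℝ) (-e) := by
    ext u
    have : 0 ≤ t + u ↔ -u ≤ t := by constructor <;> intro <;> linarith
    simp [Set.indicator, this]
  have hneg : (gaussianReal 0 1).map (fun x : ℝ => -x) = gaussianReal 0 1 := by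
    simpa using gaussianReal_map_neg (μ := 0) (v := 1)
  rw [this, ← integral_map (φ := fun x : ℝ => -x) (by fun_prop)
    ((measurable_one.indicator measurableSet_Iic).aestronglyMeasurable), hneg,
    integral_gaussianReal_eq_integral_smul one_ne_zero, stdNormalCdf,
    ← integral_indicator measurableSet_Iic]
  congr 1
  ext x
  by_cases hx : x ≤ t <;> simp [Set.indicator, hx, gaussianPDFReal, stdNormalPdf]

/-- converse direction of Theorem 1: if the observed-data
distribution `P` of `(g, x, γ)` satisfies the conditional moment equality
`E_P[g | (x,γ)] = r0 + (1 − r0 − r1)·Φ((c(r0,r1) + C(r0,r1)γ)·b1 + x·b2)`, then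
there is a probability space carrying `(G, X, Γ, Γ*, ε)` consistent with all the
conditions of the misclassified network formation model. -/
theorem identified_set_converse (d : ℕ) (hd : 1 ≤ d)
    (r0 r1 : ℝ) (hr0 : 0 ≤ r0) (hr1 : 0 ≤ r1) (hrsum : r0 + r1 < 1)
    (b1 : Fin 3 → ℝ) (b2 : Fin d → ℝ)
    (P : Measure (ℝ × (Fin d → ℝ) × (Fin 4 → ℝ))) [IsProbabilityMeasure P]
    (hP01 : ∀ᵐ p ∂P, p.1 = 0 ∨ p.1 = 1)
    (hmom : P[(fun p => p.1) | MeasurableSpace.comap Prod.snd inferInstance] =ᵐ[P]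
      fun p => r0 + (1 - r0 - r1) *
        stdNormalCdf ((cvec r0 r1 + (Cmat r0 r1).mulVec p.2.2) ⬝ᵥ b1 + p.2.1 ⬝ᵥ b2)) :
    ∃ (Ω : Type) (𝒜 : MeasurableSpace Ω) (μ : Measure Ω), IsProbabilityMeasure μ ∧
      ∃ (G : Ω → ℝ) (X : Ω → Fin d → ℝ) (Γ : Ω → Fin 4 → ℝ) (Γs : Ω → Fin 3 → ℝ)
        (ε : Ω → ℝ),
        Measurable G ∧ Measurable X ∧ Measurable Γ ∧ Measurable Γs ∧ Measurable ε ∧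
        (∀ ω, G ω = 0 ∨ G ω = 1) ∧
        (μ.map (fun ω => (G ω, X ω, Γ ω)) = P) ∧
        (μ.map ε = gaussianReal 0 1) ∧
        Indep (MeasurableSpace.comap ε inferInstance)
          (MeasurableSpace.comap (fun ω => (X ω, Γ ω, Γs ω)) inferInstance) μ ∧
        (∀ᵐ ω ∂μ, Γs ω = cvec r0 r1 + (Cmat r0 r1).mulVec (Γ ω)) ∧
        (μ[G | MeasurableSpace.comap (fun ω => (X ω, Γ ω, Γs ω, ε ω)) inferInstance]
          =ᵐ[μ] fun ω => r0 + (1 - r0 - r1) *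
            (if 0 ≤ Γs ω ⬝ᵥ b1 + X ω ⬝ᵥ b2 + ε ω then (1 : ℝ) else 0)) := by
  set gs : ((Fin d → ℝ) × (Fin 4 → ℝ)) → Fin 3 → ℝ := fun e => cvec r0 r1 + (Cmat r0 r1).mulVec e.2 with hgs
  have hgsm : Measurable gs := by
    have : Continuous gs := by
      apply Continuous.add continuous_const
      exact Continuous.matrix_mulVec continuous_const continuous_snd
    exact this.measurable
  set idx : ((Fin d → ℝ) × (Fin 4 → ℝ)) → ℝ := fun e => gs e ⬝ᵥ b1 + e.1 ⬝ᵥ b2 with hidx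
  have hidxm : Measurable idx := by
    have h1 : Continuous (fun v : Fin 3 → ℝ => v ⬝ᵥ b1) :=
      Continuous.dotProduct continuous_id continuous_const
    have h2 : Continuous (fun v : Fin d → ℝ => v ⬝ᵥ b2) :=
      Continuous.dotProduct continuous_id continuous_const
    exact (h1.measurable.comp hgsm).add (h2.measurable.comp measurable_fst)
  set Q : Measure ((Fin d → ℝ) × (Fin 4 → ℝ)) := P.map Prod.snd with hQ
  have : IsProbabilityMeasure Q := Measure.isProbabilityMeasure_map measurable_snd.aemeasurable
  set N := gaussianReal 0 1 with hN
  set U : Measure ℝ := volume.restrict (Set.Icc (0 : ℝ) 1) with hU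
  have : IsProbabilityMeasure U := ⟨by simp [hU]⟩
  set h : ((Fin d → ℝ) × (Fin 4 → ℝ)) × ℝ → ℝ := fun a => r0 + (1 - r0 - r1) *
    (if 0 ≤ idx a.1 + a.2 then (1 : ℝ) else 0) with hh
  have hite : Measurable (fun a : ((Fin d → ℝ) × (Fin 4 → ℝ)) × ℝ => if 0 ≤ idx a.1 + a.2 then (1 : ℝ) else 0) :=
    Measurable.ite (measurableSet_le measurable_const
      ((hidxm.comp measurable_fst).add measurable_snd)) measurable_const measurable_const
  have hhm : Measurable h := measurable_const.add (measurable_const.mul hite)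
  have hh0 : ∀ a, 0 ≤ h a := by
    intro a; simp only [hh]; split_ifs <;> linarith
  have hh1 : ∀ a, h a ≤ 1 := by
    intro a; simp only [hh]; split_ifs <;> linarith
  set G : (((Fin d → ℝ) × (Fin 4 → ℝ)) × ℝ) × ℝ → ℝ := fun ω => if ω.2 ≤ h ω.1 then 1 else 0 with hG
  have hGm : Measurable G := Measurable.ite (measurableSet_le measurable_snd
    (hhm.comp measurable_fst)) measurable_const measurable_const
  have hG01 : ∀ ω, G ω = 0 ∨ G ω = 1 := by
    intro ω; simp only [hG]; split_ifs <;> simp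
  set μ := (Q.prod N).prod U with hμ
  have hGi : Integrable G μ := by
    refine Integrable.of_bound (C := 1) hGm.aestronglyMeasurable (.of_forall fun ω => ?_)
    rcases hG01 ω with hω | hω <;> simp [hω]
  have hhi : Integrable h (Q.prod N) := by
    refine Integrable.of_bound (C := 1) hhm.aestronglyMeasurable (.of_forall fun ω => ?_)
    rw [Real.norm_eq_abs, abs_of_nonneg (hh0 _)]; exact hh1 _
  have hGh : ∀ a, ∫ u, G (a, u) ∂U = h a := fun a => aux_unif (h a) (hh0 a) (hh1 a)
  have hhF : ∀ e, ∫ x, h (e, x) ∂N = r0 + (1 - r0 - r1) * stdNormalCdf (idx e) := by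
    intro e
    simp only [hh]
    rw [integral_add (integrable_const _), integral_const_mul, aux_gauss]
    · simp
    · refine Integrable.const_mul ?_ _
      refine Integrable.of_bound (C := 1)
        (hite.comp measurable_prodMk_left).aestronglyMeasurable (.of_forall fun ω => ?_)
      dsimp
      split_ifs <;> simp
  have hFm : StronglyMeasurable
      (fun e => r0 + (1 - r0 - r1) * stdNormalCdf (idx e)) := by
    have := hhm.stronglyMeasurable.integral_prod_right' (ν := N)
    simpa only [hhF] using this
  have hmap1 : μ.map (fun ω => ω.1) = Q.prod N := by
    simp [hμ, Measure.map_fst_prod]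
  have hmap11 : μ.map (fun ω => ω.1.1) = Q := by
    have : μ.map (fun ω => ω.1.1) = (μ.map (fun ω => ω.1)).map Prod.fst :=
      (Measure.map_map measurable_fst measurable_fst).symm
    rw [this, hmap1]; simp [Measure.map_fst_prod]
  have hmap12 : μ.map (fun ω => ω.1.2) = N := by
    have : μ.map (fun ω => ω.1.2) = (μ.map (fun ω => ω.1)).map Prod.snd :=
      (Measure.map_map measurable_snd measurable_fst).symm
    rw [this, hmap1]; simp [Measure.map_snd_prod]
  have hTm : Measurable (fun ω : (((Fin d → ℝ) × (Fin 4 → ℝ)) × ℝ) × ℝ => (G ω, ω.1.1)) :=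
    hGm.prodMk (measurable_fst.comp measurable_fst)
  refine ⟨(((Fin d → ℝ) × (Fin 4 → ℝ)) × ℝ) × ℝ, inferInstance, μ, inferInstance, G, fun ω => ω.1.1.1,
    fun ω => ω.1.1.2, fun ω => gs ω.1.1, fun ω => ω.1.2, hGm, by fun_prop, by fun_prop,
    by fun_prop, by fun_prop, hG01, ?_, hmap12, ?_, ?_, ?_⟩
  · change μ.map (fun ω : (((Fin d → ℝ) × (Fin 4 → ℝ)) × ℝ) × ℝ => (G ω, ω.1.1)) = P
    have : IsProbabilityMeasure (μ.map (fun ω : (((Fin d → ℝ) × (Fin 4 → ℝ)) × ℝ) × ℝ => (G ω, ω.1.1))) :=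
      Measure.isProbabilityMeasure_map hTm.aemeasurable
    symm
    refine aux_law _ _ hP01 ?_ ?_ ?_
    · rw [ae_map_iff hTm.aemeasurable]
      · exact .of_forall hG01
      · exact (measurable_fst (measurableSet_singleton (0 : ℝ))).union
          (measurable_fst (measurableSet_singleton (1 : ℝ)))
    · rw [Measure.map_map measurable_snd hTm]
      exact hmap11.symm
    · intro B hB
      have hPi : Integrable (fun p : ℝ × ((Fin d → ℝ) × (Fin 4 → ℝ)) => p.1) P := by
        refine Integrable.of_bound (C := 1) measurable_fst.aestronglyMeasurable ?_
        filter_upwards [hP01] with p hp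
        rcases hp with hp | hp <;> simp [hp]
      rw [setIntegral_map (measurable_snd hB) measurable_fst.aestronglyMeasurable
        hTm.aemeasurable]
      have hs : (fun ω : (((Fin d → ℝ) × (Fin 4 → ℝ)) × ℝ) × ℝ => (G ω, ω.1.1)) ⁻¹' (Prod.snd ⁻¹' B)
          = (B ×ˢ Set.univ) ×ˢ Set.univ := by ext; simp
      rw [hs, setIntegral_prod _ hGi.integrableOn]
      simp only [Measure.restrict_univ, hGh]
      rw [setIntegral_prod _ hhi.integrableOn]
      simp only [Measure.restrict_univ, hhF]
      rw [← setIntegral_condExp (m := MeasurableSpace.comap Prod.snd inferInstance)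
        measurable_snd.comap_le hPi ⟨B, hB, rfl⟩,
        setIntegral_congr_ae (measurable_snd hB) (hmom.mono fun x hx _ => hx), hQ,
        setIntegral_map hB hFm.aestronglyMeasurable measurable_snd.aemeasurable]
  · have hi : IndepFun (fun ω : (((Fin d → ℝ) × (Fin 4 → ℝ)) × ℝ) × ℝ => ω.1.2) (fun ω => ω.1.1) μ := by
      refine IndepFun.symm ?_
      rw [indepFun_iff_map_prod_eq_prod_map_map (by fun_prop) (by fun_prop), hmap11, hmap12]
      exact hmap1
    exact hi.comp (φ := id) (ψ := fun e : ((Fin d → ℝ) × (Fin 4 → ℝ)) => (e.1, e.2, gs e)) measurable_id (by fun_prop)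
  · exact .of_forall fun _ => rfl
  · have hc : MeasurableSpace.comap
        (fun ω : (((Fin d → ℝ) × (Fin 4 → ℝ)) × ℝ) × ℝ => (ω.1.1.1, ω.1.1.2, gs ω.1.1, ω.1.2)) inferInstance
        = MeasurableSpace.comap Prod.fst inferInstance := by
      apply le_antisymm
      · apply Measurable.comap_le
        exact (show Measurable (fun a : ((Fin d → ℝ) × (Fin 4 → ℝ)) × ℝ => (a.1.1, a.1.2, gs a.1, a.2)) by
          fun_prop).comp (comap_measurable Prod.fst)
      · apply Measurable.comap_le
        exact (show Measurable (fun a : (Fin d → ℝ) × (Fin 4 → ℝ) × (Fin 3 → ℝ) × ℝ =>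
          (((a.1, a.2.1), a.2.2.2) : ((Fin d → ℝ) × (Fin 4 → ℝ)) × ℝ)) by fun_prop).comp (comap_measurable
            (fun ω : (((Fin d → ℝ) × (Fin 4 → ℝ)) × ℝ) × ℝ => (ω.1.1.1, ω.1.1.2, gs ω.1.1, ω.1.2)))
    rw [hc]
    exact aux_condExp (Q.prod N) U G hGi h hhm hGh
end

section
/- Let n ≥ 1, let 𝒳 be a type with decidable equality, and let X : Fin n → Fin n → 𝒳, G : Fin n → Fin n → ℝ, m : Fin n → Fin n → ℝ, and q : Fin n → Fin n → Fin n → ℝ. For i, j ∈ Fin n define the vectors in ℝ⁴: V(i,j) := (G(j,i), (1/n)∑_k G(k,j), (1/n)∑_k G(k,i)·G(k,j), (1/n)∑_k (G(k,i) + G(k,j))) and M(i,j) := (m(j,i), (1/n)∑_k m(k,j), (1/n)∑_k q(k,i,j), (1/n)∑_k (m(k,i) + m(k,j))). For x ∈ 𝒳 define p̂(x) := (1/n²)∑_{i,j} 1{X(i,j) = x}, and whenever p̂(x) > 0 define γ̂(x) := [(1/n²)∑_{i,j} 1{X(i,j) = x}·V(i,j)] / p̂(x) and, for each k ∈ Fin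 n, ψ(k,x) := (1/n²)∑_{i₁,j₁} (1{X(i₁,j₁) = x}/p̂(x))·(0, G(k,j₁) − m(k,j₁), G(k,i₁)·G(k,j₁) − q(k,i₁,j₁), (G(k,i₁) − m(k,i₁)) + (G(k,j₁) − m(k,j₁))) + (1/n)∑_{i₁} (1{X(i₁,k) = x}/p̂(x))·(G(k,i₁) − m(k,i₁), 0, 0, 0). Assume the symmetry condition: for all i, j, i₁, j₁ ∈ Fin n, if X(i₁,j₁) = X(i,j) then M(i₁,j₁) = M(i,j). Then for all i, j ∈ Fin n: γ̂(X(i,j)) − M(i,j) = (1/n)∑_k ψ(k, X(i,j)). -/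
open Finset

theorem gid_swap (n : ℕ) (p c d : ℝ) (w : Fin n → Fin n → ℝ) (D : Fin n → Fin n → Fin n → ℝ) :
    d * ∑ k, c * ∑ i, ∑ j, w i j / p * D k i j
      = p⁻¹ * (c * ∑ i, ∑ j, w i j * (d * ∑ k, D k i j)) := by
  have h : ∑ k, ∑ i, ∑ j, w i j / p * D k i j = ∑ i, ∑ j, ∑ k, w i j / p * D k i j := by
    rw [Finset.sum_comm]
    exact Finset.sum_congr rfl fun i _ => Finset.sum_comm
  rw [← Finset.mul_sum, h]
  simp only [Finset.mul_sum]
  refine Finset.sum_congr rfl fun i _ => Finset.sum_congr rfl fun j _ =>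
    Finset.sum_congr rfl fun k _ => ?_
  rw [div_eq_mul_inv]; ring

/-- influence-function decomposition, Lemma A.3 of the paper:
under the symmetry condition on the conditional-mean vector `M`, the estimation
error `γ̂(X(i,j)) − M(i,j)` equals the average over agents `k` of the per-agent
influence functions `ψ(k, X(i,j))`. -/
theorem gamma_influence_decomposition (n : ℕ) (hn : 1 ≤ n)
    (𝒳 : Type*) [DecidableEq 𝒳]
    (X : Fin n → Fin n → 𝒳) (G m : Fin n → Fin n → ℝ)
    (q : Fin n → Fin n → Fin n → ℝ)
    (V M : Fin n → Fin n → Fin 4 → ℝ)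
    (hV : ∀ i j, V i j =
      ![G j i,
        (1 / (n : ℝ)) * ∑ k, G k j,
        (1 / (n : ℝ)) * ∑ k, G k i * G k j,
        (1 / (n : ℝ)) * ∑ k, (G k i + G k j)])
    (hM : ∀ i j, M i j =
      ![m j i,
        (1 / (n : ℝ)) * ∑ k, m k j,
        (1 / (n : ℝ)) * ∑ k, q k i j,
        (1 / (n : ℝ)) * ∑ k, (m k i + m k j)])
    (phat : 𝒳 → ℝ)
    (hphat : ∀ x, phat x =
      (1 / (n : ℝ) ^ 2) * ∑ i, ∑ j, (if X i j = x then (1 : ℝ) else 0))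
    (γhat : 𝒳 → Fin 4 → ℝ)
    (hγhat : ∀ x, 0 < phat x →
      γhat x = (phat x)⁻¹ •
        ((1 / (n : ℝ) ^ 2) • ∑ i, ∑ j, (if X i j = x then V i j else 0)))
    (ψ : Fin n → 𝒳 → Fin 4 → ℝ)
    (hψ : ∀ k x, 0 < phat x →
      ψ k x =
        (1 / (n : ℝ) ^ 2) • (∑ i₁, ∑ j₁,
          ((if X i₁ j₁ = x then (1 : ℝ) else 0) / phat x) •
            (![0,
               G k j₁ - m k j₁,
               G k i₁ * G k j₁ - q k i₁ j₁,
               (G k i₁ - m k i₁) + (G k j₁ - m k j₁)] : Fin 4 → ℝ))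
        + (1 / (n : ℝ)) • (∑ i₁,
          ((if X i₁ k = x then (1 : ℝ) else 0) / phat x) •
            (![G k i₁ - m k i₁, 0, 0, 0] : Fin 4 → ℝ)))
    (hsym : ∀ i j i₁ j₁, X i₁ j₁ = X i j → M i₁ j₁ = M i j) :
    ∀ i j, γhat (X i j) - M i j = (1 / (n : ℝ)) • ∑ k, ψ k (X i j) := by
  intro i j
  have hn0 : (0 : ℝ) < n := by exact_mod_cast hn
  have hp : 0 < phat (X i j) := by
    rw [hphat]
    refine mul_pos (by positivity) ?_
    refine Finset.sum_pos' (fun a _ => Finset.sum_nonneg fun b _ => by split_ifs <;> norm_num)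
      ⟨i, Finset.mem_univ _, ?_⟩
    exact Finset.sum_pos' (fun b _ => by split_ifs <;> norm_num)
      ⟨j, Finset.mem_univ _, by simp⟩
  have hpe := hphat (X i j)
  have hγ := hγhat _ hp
  have hψ' := fun k => hψ k _ hp
  have hs := hsym i j
  generalize X i j = x at *
  obtain ⟨w, hw⟩ : ∃ w : Fin n → Fin n → ℝ, w = fun a b => if X a b = x then (1 : ℝ) else 0 :=
    ⟨_, rfl⟩
  have hwa : ∀ a b, (if X a b = x then (1 : ℝ) else 0) = w a b := fun a b => by rw [hw]
  have key : ∀ c, γhat x c - M i j c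
      = (phat x)⁻¹ * ((1 / (n : ℝ) ^ 2) * ∑ a, ∑ b, w a b * (V a b c - M a b c)) := by
    intro c
    have h1 : γhat x c = (phat x)⁻¹ * ((1 / (n : ℝ) ^ 2) * ∑ a, ∑ b, w a b * V a b c) := by
      rw [hγ]
      simp only [Pi.smul_apply, Finset.sum_apply, smul_eq_mul, hw]
      congr 2
      refine Finset.sum_congr rfl fun a _ => Finset.sum_congr rfl fun b _ => ?_
      split_ifs <;> simp
    have h2 : ∑ a, ∑ b, w a b * M a b c = (∑ a, ∑ b, w a b) * M i j c := by
      simp only [Finset.sum_mul]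
      refine Finset.sum_congr rfl fun a _ => Finset.sum_congr rfl fun b _ => ?_
      by_cases h : X a b = x
      · rw [hs a b h]
      · simp [hw, h]
    have h3 : M i j c = (phat x)⁻¹ * ((1 / (n : ℝ) ^ 2) * ∑ a, ∑ b, w a b * M a b c) := by
      simp only [hwa] at hpe
      rw [h2, ← mul_assoc (1 / (n : ℝ) ^ 2), ← hpe, inv_mul_cancel_left₀ hp.ne']
    rw [h1]
    conv_lhs => rw [h3]
    simp only [mul_sub, Finset.sum_sub_distrib]
  simp only [hwa] at hψ'
  funext c
  rw [Pi.sub_apply, key c]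
  simp only [hψ', Pi.smul_apply, Finset.sum_apply, Pi.add_apply, smul_eq_mul, hV, hM]
  fin_cases c
  · simp only [Fin.zero_eta, Matrix.cons_val_zero, mul_zero, Finset.sum_const_zero, zero_add]
    rw [Finset.sum_comm]
    simp only [Finset.mul_sum]
    refine Finset.sum_congr rfl fun a _ => Finset.sum_congr rfl fun b _ => ?_
    rw [div_eq_mul_inv (w b a)]
    field_simp
  all_goals
    simp [-one_div, -mul_eq_mul_left_iff]
    rw [gid_swap]
    simp only [← mul_sub, ← Finset.sum_sub_distrib]
  refine congrArg _ (congrArg _ (Finset.sum_congr rfl fun a _ => Finset.sum_congr rfl fun b _ => ?_))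
  simp only [Finset.sum_add_distrib, Finset.sum_sub_distrib]
  ring
end
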